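/- arXiv:1609.06651 — 3 statements merged into one kernel-verified Lean document; each statement's English description precedes it below -/
import Mathlib

section
/- Fix a positive integer $n$, a real number $p \in (0,1)$, and for every $j \le n$ let $X_j \sim \mathrm{Bin}(j,p)$. Let $k$ be a positive integer with $k \le n-1$. Then for every integer $\ell$ with $0 \le \ell \le k-1$, one has $\mathbb{P}[X_n \ge k] = \mathbb{P}[X_{n-(\ell+1)} \ge k - (\ell+1)] \cdot \prod_{j=0}^{\ell} \frac{p(n-j)}{\mathbb{E}[X_{n-j} \mid X_{n-j} \ge k-j]}$. -/
/-- The binomial probability mass function: `P[Bin(n,p) = i] = C(n,i) p^i (1-p)^(n-i)`. -/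
noncomputable def binPMF (n : ℕ) (p : ℝ) (i : ℕ) : ℝ :=
  (n.choose i : ℝ) * p ^ i * (1 - p) ^ (n - i)

/-- The binomial tail probability `P[Bin(n,p) ≥ k]`. -/
noncomputable def binTail (n : ℕ) (p : ℝ) (k : ℕ) : ℝ :=
  ∑ i ∈ Finset.Icc k n, binPMF n p i

/-- The tail conditional expectation `E[Bin(n,p) | Bin(n,p) ≥ k]`,
i.e. `E[X · 1_{X ≥ k}] / P[X ≥ k]`. -/
noncomputable def binTCE (n : ℕ) (p : ℝ) (k : ℕ) : ℝ :=
  (∑ i ∈ Finset.Icc k n, (i : ℝ) * binPMF n p i) / binTail n p k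

/-!
The identity `i * C(n, i) = n * C(n - 1, i - 1)` says that size-biasing `Bin(n, p)` yields
`1 + Bin(n - 1, p)`, so `E[X_n; X_n ≥ k] = p n P[X_{n-1} ≥ k - 1]`. Dividing by `P[X_n ≥ k]`, the
factor `p n / E[X_n | X_n ≥ k]` is the ratio `P[X_n ≥ k] / P[X_{n-1} ≥ k - 1]`, and the product of
these ratios telescopes.
-/

lemma succ_mul_binPMF_succ_succ (n i : ℕ) (p : ℝ) :
    ((i + 1 : ℕ) : ℝ) * binPMF (n + 1) p (i + 1) = p * (n + 1) * binPMF n p i := by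
  have hchoose : ((n : ℝ) + 1) * n.choose i = (n + 1).choose (i + 1) * ((i : ℝ) + 1) :=
    mod_cast Nat.add_one_mul_choose_eq n i
  simp only [binPMF, Nat.add_sub_add_right]
  push_cast
  linear_combination -(p ^ (i + 1) * (1 - p) ^ (n - i)) * hchoose

lemma sum_Icc_mul_binPMF_succ (n k : ℕ) (p : ℝ) :
    ∑ i ∈ Finset.Icc (k + 1) (n + 1), (i : ℝ) * binPMF (n + 1) p i =
      p * (n + 1) * binTail n p k := by
  rw [← Finset.map_add_right_Icc k n 1, Finset.sum_map, binTail, Finset.mul_sum]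
  exact Finset.sum_congr rfl fun i _ ↦ succ_mul_binPMF_succ_succ n i p

lemma binTCE_succ_succ (n k : ℕ) (p : ℝ) :
    binTCE (n + 1) p (k + 1) = p * (n + 1) * binTail n p k / binTail (n + 1) p (k + 1) := by
  rw [binTCE, sum_Icc_mul_binPMF_succ]

section UnitInterval

variable {p : ℝ} {n k : ℕ}

lemma binPMF_nonneg (hp₀ : 0 ≤ p) (hp₁ : p ≤ 1) (n i : ℕ) : 0 ≤ binPMF n p i :=
  mul_nonneg (by positivity) (pow_nonneg (sub_nonneg.2 hp₁) _)

lemma binPMF_self (n : ℕ) (p : ℝ) : binPMF n p n = p ^ n := by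
  simp [binPMF]

lemma pow_le_binTail (hp₀ : 0 ≤ p) (hp₁ : p ≤ 1) (hkn : k ≤ n) : p ^ n ≤ binTail n p k :=
  calc p ^ n = binPMF n p n := (binPMF_self n p).symm
    _ ≤ binTail n p k :=
      Finset.single_le_sum (fun i _ ↦ binPMF_nonneg hp₀ hp₁ n i) (Finset.right_mem_Icc.2 hkn)

lemma binTail_pos (hp₀ : 0 < p) (hp₁ : p ≤ 1) (hkn : k ≤ n) : 0 < binTail n p k :=
  (pow_pos hp₀ n).trans_le (pow_le_binTail hp₀.le hp₁ hkn)

lemma binTail_succ_succ (hp₀ : 0 < p) (hp₁ : p ≤ 1) (hkn : k ≤ n) :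
    binTail (n + 1) p (k + 1) =
      binTail n p k * (p * (n + 1) / binTCE (n + 1) p (k + 1)) := by
  have htail : binTail n p k ≠ 0 := (binTail_pos hp₀ hp₁ hkn).ne'
  have htail_succ : binTail (n + 1) p (k + 1) ≠ 0 :=
    (binTail_pos hp₀ hp₁ (Nat.succ_le_succ hkn)).ne'
  rw [binTCE_succ_succ]
  field_simp

lemma binTail_add_add (hp₀ : 0 < p) (hp₁ : p ≤ 1) (hkn : k ≤ n) (r : ℕ) :
    binTail (n + r) p (k + r) =
      binTail n p k *
        ∏ i ∈ Finset.range r, p * ((n + i : ℕ) + 1) / binTCE (n + i + 1) p (k + i + 1) := by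
  induction r with
  | zero => simp
  | succ r ih =>
    rw [Finset.prod_range_succ, ← mul_assoc, ← ih]
    exact binTail_succ_succ hp₀ hp₁ (Nat.add_le_add_right hkn r)

end UnitInterval

theorem binomial_tail_product_formula
    (n k : ℕ) (p : ℝ) (hn : 0 < n) (hp : 0 < p) (hp1 : p < 1)
    (hk : 0 < k) (hkn : k ≤ n - 1)
    (ℓ : ℕ) (hℓ : ℓ ≤ k - 1) :
    binTail n p k =
      binTail (n - (ℓ + 1)) p (k - (ℓ + 1)) *
        ∏ j ∈ Finset.range (ℓ + 1), p * ((n : ℝ) - j) / binTCE (n - j) p (k - j) := by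
  obtain ⟨m, rfl⟩ : ∃ m, n = m + (ℓ + 1) := Nat.exists_eq_add_of_le' (by lia)
  obtain ⟨q, rfl⟩ : ∃ q, k = q + (ℓ + 1) := Nat.exists_eq_add_of_le' (by lia)
  rw [Nat.add_sub_cancel, Nat.add_sub_cancel, binTail_add_add hp hp1.le (by lia),
    ← Finset.prod_range_reflect]
  congr 1
  refine Finset.prod_congr rfl fun j hj ↦ ?_
  obtain ⟨i, rfl⟩ : ∃ i, ℓ = i + j :=
    Nat.exists_eq_add_of_le' (Nat.lt_succ_iff.1 (Finset.mem_range.1 hj))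
  have hindex : i + j + 1 - 1 - j = i := by lia
  have hsub (a : ℕ) : a + (i + j + 1) - j = a + i + 1 := by lia
  rw [hindex, hsub, hsub]
  push_cast
  ring
end

section
/- Let $n$ be a positive integer, $p \in (0,1)$, and let $X \sim \mathrm{Bin}(n,p)$. If $k$ is a positive integer with $np < k < np + 1 - p$ and $k \le n-1$, then $\mathbb{P}[X \ge k] \ge \frac{1}{2} p^2 \cdot \frac{n}{k} \ge \frac{p}{2}\left(1 - \frac{1-p}{k}\right) \ge \frac{p}{2}\left(1 - \frac{1}{k}\right)$. -/
/-!
A variable `X ~ Bin(m, p)` whose mean is at least the integer `j` satisfies `P[X ≥ j] ≥ 1/2`. To see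
this, fold the distribution at `j - 1/2`, comparing `P[X = j + i]` with `P[X = j - 1 - i]`. Their
ratio starts at a value `≥ 1`, and the quotient of two consecutive ratios is
`((m - j + 1)² - (i + 1)²) p² / ((j² - (i + 1)²) (1 - p)²)`, so the ratio never increases again
once it has decreased: the difference of the two masses changes sign at most once, from `+` to `-`.
As the mean makes the first moment of this difference nonnegative, its sum is nonnegative too.

Conditioning on the first trial being a success then gives
`P[Bin(n, p) ≥ k] ≥ p P[Bin(n - 1, p) ≥ k - 1] ≥ p / 2`, because `k - 1 ≤ (n - 1) p`.
-/

open Finset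

theorem sum_mul_le_mul_sum_of_sign_change {ι : Type*} {s : Finset ι} {w d : ι → ℝ} {c : ℝ}
    (hnonneg : ∀ i ∈ s, w i < c → 0 ≤ d i) (hnonpos : ∀ i ∈ s, c ≤ w i → d i ≤ 0) :
    ∑ i ∈ s, w i * d i ≤ c * ∑ i ∈ s, d i := by
  rw [mul_sum]
  refine sum_le_sum fun i hi => ?_
  rcases lt_or_ge (w i) c with hw | hw
  · exact mul_le_mul_of_nonneg_right hw.le (hnonneg i hi hw)
  · exact mul_le_mul_of_nonpos_right hw (hnonpos i hi hw)

theorem sum_nonneg_of_sign_change {s : Finset ℕ} {d : ℕ → ℝ} (hzero : 0 ≤ d 0)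
    (hsign : ∀ ⦃i i'⦄, i ≤ i' → d i < 0 → d i' ≤ 0)
    (hmoment : 0 ≤ ∑ i ∈ s, (i : ℝ) * d i) : 0 ≤ ∑ i ∈ s, d i := by
  classical
  by_cases hneg : ∃ i, d i < 0
  · set c := Nat.find hneg
    have hc : d c < 0 := Nat.find_spec hneg
    have hc_pos : 0 < c := Nat.pos_of_ne_zero fun h => (h ▸ hc).not_ge hzero
    have hmoment_le : ∑ i ∈ s, (i : ℝ) * d i ≤ c * ∑ i ∈ s, d i :=
      sum_mul_le_mul_sum_of_sign_change
        (fun i _ hi => not_lt.1 (Nat.find_min hneg (Nat.cast_lt.1 hi)))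
        (fun i _ hi => hsign (Nat.cast_le.1 hi) hc)
    exact nonneg_of_mul_nonneg_right (hmoment.trans hmoment_le) (Nat.cast_pos.2 hc_pos)
  · push Not at hneg
    exact sum_nonneg fun i _ => hneg i

-- `hratio` says that the step to the next terms multiplies the ratio `u / l` by `β / α`.
theorem le_next_of_ratio_nondecreasing {u u' l l' α β : ℝ} (hu : 0 ≤ u) (hl : 0 < l)
    (hl' : 0 ≤ l') (hα : 0 < α) (hratio : u' * (l * α) = u * l' * β) (hαβ : α ≤ β)
    (hle : l ≤ u) : l' ≤ u' := by
  refine le_of_mul_le_mul_right ?_ (mul_pos hl hα)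
  calc l' * (l * α) = l * l' * α := by ring
    _ ≤ u * l' * β := by gcongr
    _ = u' * (l * α) := hratio.symm

theorem next_le_of_ratio_nonincreasing {u u' l l' α β : ℝ} (hu : 0 ≤ u) (hl : 0 < l)
    (hl' : 0 ≤ l') (hα : 0 < α) (hratio : u' * (l * α) = u * l' * β) (hαβ : β ≤ α)
    (hle : u ≤ l) : u' ≤ l' := by
  refine le_of_mul_le_mul_right ?_ (mul_pos hl hα)
  calc u' * (l * α) = u * l' * β := hratio
    _ ≤ u * l' * α := by gcongr
    _ ≤ l * l' * α := by gcongr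
    _ = l' * (l * α) := by ring

section Mass

variable {m x : ℕ} {p : ℝ}

theorem binPMF_eq_eval_bernsteinPolynomial (m : ℕ) (p : ℝ) (x : ℕ) :
    binPMF m p x = (bernsteinPolynomial ℝ m x).eval p := by
  simp [binPMF, bernsteinPolynomial]

theorem sum_range_binPMF (m : ℕ) (p : ℝ) : ∑ x ∈ range (m + 1), binPMF m p x = 1 := by
  simpa [Polynomial.eval_finsetSum, binPMF_eq_eval_bernsteinPolynomial] using
    congrArg (Polynomial.eval p) (bernsteinPolynomial.sum ℝ m)

theorem sum_range_cast_mul_binPMF (m : ℕ) (p : ℝ) :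
    ∑ x ∈ range (m + 1), (x : ℝ) * binPMF m p x = m * p := by
  simpa [Polynomial.eval_finsetSum, binPMF_eq_eval_bernsteinPolynomial] using
    congrArg (Polynomial.eval p) (bernsteinPolynomial.sum_smul ℝ m)

theorem binPMF_eq_zero_of_lt (p : ℝ) (h : m < x) : binPMF m p x = 0 := by
  simp [binPMF, Nat.choose_eq_zero_of_lt h]

theorem binPMF_nonneg_s15 (hp : 0 ≤ p) (hp1 : p ≤ 1) (m x : ℕ) : 0 ≤ binPMF m p x :=
  mul_nonneg (mul_nonneg (Nat.cast_nonneg _) (pow_nonneg hp _))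
    (pow_nonneg (sub_nonneg.2 hp1) _)

theorem binPMF_pos (hp : 0 < p) (hp1 : p < 1) (h : x ≤ m) : 0 < binPMF m p x :=
  mul_pos (mul_pos (Nat.cast_pos.2 (Nat.choose_pos h)) (pow_pos hp _))
    (pow_pos (sub_pos.2 hp1) _)

theorem succ_mul_binPMF_succ (m : ℕ) (p : ℝ) (x : ℕ) :
    ((x : ℝ) + 1) * (1 - p) * binPMF m p (x + 1) = ((m : ℝ) - x) * p * binPMF m p x := by
  rcases lt_trichotomy x m with h | rfl | h
  · have hchoose : (m.choose (x + 1) : ℝ) * (x + 1) = m.choose x * ((m : ℝ) - x) := by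
      rw [← Nat.cast_sub h.le]
      exact_mod_cast Nat.choose_succ_right_eq m x
    have hexp : m - x = m - (x + 1) + 1 := by lia
    rw [binPMF, binPMF, hexp]
    linear_combination p ^ (x + 1) * (1 - p) ^ (m - (x + 1) + 1) * hchoose
  · simp [binPMF_eq_zero_of_lt]
  · simp [binPMF_eq_zero_of_lt p h, binPMF_eq_zero_of_lt p (h.trans x.lt_succ_self)]

theorem binPMF_succ_succ (m : ℕ) (p : ℝ) (x : ℕ) :
    binPMF (m + 1) p (x + 1) = p * binPMF m p x + (1 - p) * binPMF m p (x + 1) := by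
  rcases lt_or_ge x m with h | h
  · have hexp : m - x = m - (x + 1) + 1 := by lia
    simp only [binPMF, Nat.choose_succ_succ', Nat.add_sub_add_right, Nat.cast_add, hexp]
    ring
  · rw [binPMF_eq_zero_of_lt p (Nat.lt_succ_of_le h)]
    simp only [binPMF, Nat.choose_succ_succ', Nat.choose_eq_zero_of_lt (Nat.lt_succ_of_le h),
      Nat.add_sub_add_right, add_zero]
    ring

end Mass

section Tail

variable {p : ℝ}

theorem mul_binTail_le_binTail_succ_succ (hp : 0 ≤ p) (hp1 : p ≤ 1) (m j : ℕ) :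
    p * binTail m p j ≤ binTail (m + 1) p (j + 1) := by
  simp only [binTail, ← map_add_right_Icc, sum_map, addRightEmbedding_apply, mul_sum]
  refine sum_le_sum fun x _ => ?_
  rw [binPMF_succ_succ]
  exact le_add_of_nonneg_right (mul_nonneg (sub_nonneg.2 hp1) (binPMF_nonneg_s15 hp hp1 m (x + 1)))

theorem binTail_eq_sum_range (m : ℕ) (p : ℝ) (j : ℕ) :
    binTail m p j = ∑ i ∈ range (m + 1), binPMF m p (j + i) := by
  rw [binTail, ← Ico_add_one_right_eq_Icc, sum_Ico_eq_sum_range]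
  refine sum_subset (range_subset_range.2 (Nat.sub_le _ _)) fun i _ hi => ?_
  rw [mem_range] at hi
  exact binPMF_eq_zero_of_lt p (by lia)

end Tail

/-- The mass `P[X = j - 1 - i]` of `X ~ Bin(m, p)` at the mirror image of `j + i` about `j - 1/2`.
It is set to `0` for `i ≥ j`, where `j - 1 - i` would be negative. -/
noncomputable def mirrorPMF (m : ℕ) (p : ℝ) (j i : ℕ) : ℝ :=
  if i < j then binPMF m p (j - 1 - i) else 0

section Mirror

variable {m j i : ℕ} {p : ℝ}

theorem mirrorPMF_of_lt (m : ℕ) (p : ℝ) (h : i < j) :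
    mirrorPMF m p j i = binPMF m p (j - 1 - i) :=
  if_pos h

theorem mirrorPMF_of_le (m : ℕ) (p : ℝ) (h : j ≤ i) : mirrorPMF m p j i = 0 :=
  if_neg h.not_gt

theorem mirrorPMF_nonneg (hp : 0 ≤ p) (hp1 : p ≤ 1) (m j i : ℕ) : 0 ≤ mirrorPMF m p j i := by
  unfold mirrorPMF
  split_ifs
  exacts [binPMF_nonneg_s15 hp hp1 _ _, le_rfl]

theorem mirrorPMF_pos (hp : 0 < p) (hp1 : p < 1) (hj : j ≤ m) (hi : i < j) :
    0 < mirrorPMF m p j i := by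
  rw [mirrorPMF_of_lt m p hi]
  exact binPMF_pos hp hp1 (by lia)

theorem sum_range_mul_binPMF_eq_mirror_add (p : ℝ) (hj : j ≤ m + 1) (f : ℕ → ℝ) :
    ∑ x ∈ range (m + 1), f x * binPMF m p x =
      ∑ i ∈ range (m + 1), f (j - 1 - i) * mirrorPMF m p j i +
        ∑ i ∈ range (m + 1), f (j + i) * binPMF m p (j + i) := by
  have hextend : ∑ x ∈ range (m + 1), f x * binPMF m p x =
      ∑ x ∈ range (j + (m + 1)), f x * binPMF m p x := by
    refine sum_subset (range_subset_range.2 (Nat.le_add_left _ _)) fun x _ hx => ?_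
    rw [binPMF_eq_zero_of_lt p (by simpa using hx), mul_zero]
  have hmirror : ∑ i ∈ range (m + 1), f (j - 1 - i) * mirrorPMF m p j i =
      ∑ i ∈ range j, f (j - 1 - i) * binPMF m p (j - 1 - i) := by
    refine (sum_subset_zero_on_sdiff (range_subset_range.2 hj) (fun i hi => ?_)
      fun i hi => ?_).symm
    · rw [mirrorPMF_of_le m p (by simpa using (mem_sdiff.1 hi).2), mul_zero]
    · rw [mirrorPMF_of_lt m p (mem_range.1 hi)]
  rw [hextend, hmirror, sum_range_add, sum_range_reflect fun x => f x * binPMF m p x]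

theorem sum_mirrorPMF_add_binTail (p : ℝ) (hj : j ≤ m + 1) :
    ∑ i ∈ range (m + 1), mirrorPMF m p j i + binTail m p j = 1 := by
  rw [binTail_eq_sum_range, ← sum_range_binPMF m p]
  simpa only [one_mul] using (sum_range_mul_binPMF_eq_mirror_add p hj fun _ => 1).symm

theorem sum_mul_binPMF_sub_mirrorPMF (p : ℝ) (hj : j ≤ m + 1) :
    ∑ i ∈ range (m + 1), (i : ℝ) * (binPMF m p (j + i) - mirrorPMF m p j i) =
      m * p - j + ∑ i ∈ range (m + 1), mirrorPMF m p j i := by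
  have hmean : ∑ x ∈ range (m + 1), ((x : ℝ) - j) * binPMF m p x = m * p - j := by
    simp only [sub_mul, sum_sub_distrib, ← mul_sum, sum_range_cast_mul_binPMF, sum_range_binPMF,
      mul_one]
  have hdist : ∀ i, (((j - 1 - i : ℕ) : ℝ) - j) * mirrorPMF m p j i =
      -(((i : ℝ) + 1) * mirrorPMF m p j i) := by
    intro i
    rcases lt_or_ge i j with hi | hi
    · have hcast : ((j - 1 - i : ℕ) : ℝ) + i + 1 = j := by
        exact_mod_cast (by lia : j - 1 - i + i + 1 = j)
      linear_combination mirrorPMF m p j i * hcast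
    · simp [mirrorPMF_of_le m p hi]
  rw [← hmean, sum_range_mul_binPMF_eq_mirror_add p hj fun x => (x : ℝ) - j]
  simp only [hdist, ← sum_add_distrib]
  refine sum_congr rfl fun i _ => ?_
  push_cast
  ring

end Mirror

/-- The ratio `P[X = j + i] / P[X = j - 1 - i]` for `X ~ Bin(m, p)` strictly decreases from `i` to
`i + 1`, expressed through the quotient of the two ratios with denominators cleared. It has this
meaning only for `i + 1 < j`, where both masses in the denominators are defined. -/
def RatioDecreasesAt (m : ℕ) (p : ℝ) (j i : ℕ) : Prop :=
  (((m : ℝ) + 1 - j) ^ 2 - ((i : ℝ) + 1) ^ 2) * p ^ 2 <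
    ((j : ℝ) ^ 2 - ((i : ℝ) + 1) ^ 2) * (1 - p) ^ 2

section Crossing

variable {m j i i' : ℕ} {p : ℝ}

theorem sq_mul_one_sub_sq_le (hp1 : p ≤ 1) (hj : (j : ℝ) ≤ (m + 1) * p) :
    (j : ℝ) ^ 2 * (1 - p) ^ 2 ≤ ((m : ℝ) + 1 - j) ^ 2 * p ^ 2 := by
  have hbase : (j : ℝ) * (1 - p) ≤ ((m : ℝ) + 1 - j) * p := by linarith
  have hnonneg : 0 ≤ (j : ℝ) * (1 - p) := mul_nonneg j.cast_nonneg (sub_nonneg.2 hp1)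
  simpa only [mul_pow] using pow_le_pow_left₀ hnonneg hbase 2

namespace RatioDecreasesAt

theorem one_sub_sq_lt_sq (h : RatioDecreasesAt m p j i) (hp1 : p ≤ 1)
    (hj : (j : ℝ) ≤ (m + 1) * p) : (1 - p) ^ 2 < p ^ 2 := by
  have hscaled : ((i : ℝ) + 1) ^ 2 * (1 - p) ^ 2 < ((i : ℝ) + 1) ^ 2 * p ^ 2 := by
    unfold RatioDecreasesAt at h
    linarith [sq_mul_one_sub_sq_le hp1 hj]
  exact lt_of_mul_lt_mul_left hscaled (sq_nonneg _)

theorem mono (h : RatioDecreasesAt m p j i) (hp1 : p ≤ 1) (hj : (j : ℝ) ≤ (m + 1) * p)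
    (hi : i ≤ i') : RatioDecreasesAt m p j i' := by
  have hsq : ((i : ℝ) + 1) ^ 2 ≤ ((i' : ℝ) + 1) ^ 2 := by gcongr
  have hgap := mul_le_mul_of_nonneg_right hsq (sub_nonneg.2 (h.one_sub_sq_lt_sq hp1 hj).le)
  unfold RatioDecreasesAt at h ⊢
  linarith

theorem lt_two_mul (h : RatioDecreasesAt m p j i) (hp1 : p ≤ 1) (hj : (j : ℝ) ≤ (m + 1) * p)
    (hi : i < j) : m < 2 * j := by
  have hij : ((i : ℝ) + 1) ^ 2 ≤ (j : ℝ) ^ 2 := by gcongr; exact_mod_cast hi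
  have hpq := h.one_sub_sq_lt_sq hp1 hj
  have hsq : ((m : ℝ) + 1 - j) ^ 2 - ((i : ℝ) + 1) ^ 2 < (j : ℝ) ^ 2 - ((i : ℝ) + 1) ^ 2 :=
    lt_of_mul_lt_mul_right
      (h.trans_le (mul_le_mul_of_nonneg_left hpq.le (sub_nonneg.2 hij))) (sq_nonneg p)
  have hbase : (m : ℝ) + 1 - j < j :=
    lt_of_pow_lt_pow_left₀ 2 j.cast_nonneg (sub_lt_sub_iff_right _ |>.1 hsq)
  have hcast : (m : ℝ) < 2 * j := by linarith
  exact_mod_cast hcast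

end RatioDecreasesAt

theorem binPMF_add_succ_mul_mirrorPMF (m : ℕ) (p : ℝ) (hi : i + 1 < j) :
    binPMF m p (j + (i + 1)) *
        (mirrorPMF m p j i * (((j : ℝ) ^ 2 - ((i : ℝ) + 1) ^ 2) * (1 - p) ^ 2)) =
      binPMF m p (j + i) * mirrorPMF m p j (i + 1) *
        ((((m : ℝ) + 1 - j) ^ 2 - ((i : ℝ) + 1) ^ 2) * p ^ 2) := by
  obtain ⟨x, rfl⟩ : ∃ x, j = x + i + 2 := ⟨j - i - 2, by lia⟩
  have hupper := succ_mul_binPMF_succ m p (x + i + 2 + i)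
  have hlower := succ_mul_binPMF_succ m p x
  rw [mirrorPMF_of_lt m p hi, mirrorPMF_of_lt m p (by lia),
    show x + i + 2 - 1 - i = x + 1 by lia, show x + i + 2 - 1 - (i + 1) = x by lia, ← add_assoc]
  push_cast at hupper ⊢
  linear_combination congrArg₂ (· * ·) hupper hlower

theorem mirrorPMF_zero_le_binPMF (hp : 0 ≤ p) (hp1 : p < 1) (hj : (j : ℝ) ≤ (m + 1) * p) :
    mirrorPMF m p j 0 ≤ binPMF m p j := by
  rcases j with _ | x
  · rw [mirrorPMF_of_le m p le_rfl]
    exact binPMF_nonneg_s15 hp hp1.le m 0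
  · rw [mirrorPMF_of_lt m p (Nat.zero_lt_succ x), Nat.succ_sub_one, Nat.sub_zero]
    push_cast at hj
    have hfactor : ((x : ℝ) + 1) * (1 - p) ≤ ((m : ℝ) - x) * p := by linarith
    have hfactor_pos : 0 < ((x : ℝ) + 1) * (1 - p) :=
      mul_pos x.cast_add_one_pos (sub_pos.2 hp1)
    refine le_of_mul_le_mul_left ?_ hfactor_pos
    rw [succ_mul_binPMF_succ]
    exact mul_le_mul_of_nonneg_right hfactor (binPMF_nonneg_s15 hp hp1.le m x)

theorem sq_sub_sq_mul_one_sub_sq_pos (hp1 : p < 1) (hi : i + 1 < j) :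
    0 < ((j : ℝ) ^ 2 - ((i : ℝ) + 1) ^ 2) * (1 - p) ^ 2 := by
  have hsq : ((i : ℝ) + 1) ^ 2 < (j : ℝ) ^ 2 := by gcongr; exact_mod_cast hi
  exact mul_pos (sub_pos.2 hsq) (pow_pos (sub_pos.2 hp1) 2)

theorem mirrorPMF_succ_le_binPMF_add_succ (hp : 0 < p) (hp1 : p < 1) (hjm : j ≤ m) (hi : i + 1 < j)
    (hinc : ¬RatioDecreasesAt m p j i) (hle : mirrorPMF m p j i ≤ binPMF m p (j + i)) :
    mirrorPMF m p j (i + 1) ≤ binPMF m p (j + (i + 1)) :=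
  le_next_of_ratio_nondecreasing (binPMF_nonneg_s15 hp.le hp1.le m (j + i))
    (mirrorPMF_pos hp hp1 hjm (by lia)) (mirrorPMF_pos hp hp1 hjm hi).le
    (sq_sub_sq_mul_one_sub_sq_pos hp1 hi) (binPMF_add_succ_mul_mirrorPMF m p hi) (not_lt.1 hinc) hle

theorem binPMF_add_succ_le_mirrorPMF_succ (hp : 0 < p) (hp1 : p < 1) (hjm : j ≤ m) (hi : i + 1 < j)
    (hdec : RatioDecreasesAt m p j i) (hle : binPMF m p (j + i) ≤ mirrorPMF m p j i) :
    binPMF m p (j + (i + 1)) ≤ mirrorPMF m p j (i + 1) :=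
  next_le_of_ratio_nonincreasing (binPMF_nonneg_s15 hp.le hp1.le m (j + i))
    (mirrorPMF_pos hp hp1 hjm (by lia)) (mirrorPMF_pos hp hp1 hjm hi).le
    (sq_sub_sq_mul_one_sub_sq_pos hp1 hi) (binPMF_add_succ_mul_mirrorPMF m p hi) hdec.le hle

theorem lt_of_binPMF_add_lt_mirrorPMF (hp : 0 ≤ p) (hp1 : p ≤ 1)
    (hlt : binPMF m p (j + i) < mirrorPMF m p j i) : i < j := by
  by_contra! hji
  rw [mirrorPMF_of_le m p hji] at hlt
  exact hlt.not_ge (binPMF_nonneg_s15 hp hp1 m (j + i))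

theorem ratioDecreasesAt_of_binPMF_add_succ_lt (hp : 0 < p) (hp1 : p < 1) (hjm : j ≤ m)
    (hj : (j : ℝ) ≤ (m + 1) * p) (hlt : binPMF m p (j + (i + 1)) < mirrorPMF m p j (i + 1)) :
    RatioDecreasesAt m p j i := by
  induction i with
  | zero =>
    by_contra hinc
    exact hlt.not_ge (mirrorPMF_succ_le_binPMF_add_succ hp hp1 hjm
      (lt_of_binPMF_add_lt_mirrorPMF hp.le hp1.le hlt) hinc (mirrorPMF_zero_le_binPMF hp.le hp1 hj))
  | succ i ih =>
    rcases lt_or_ge (binPMF m p (j + (i + 1))) (mirrorPMF m p j (i + 1)) with hprev | hprev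
    · exact (ih hprev).mono hp1.le hj i.le_succ
    · by_contra hinc
      exact hlt.not_ge (mirrorPMF_succ_le_binPMF_add_succ hp hp1 hjm
        (lt_of_binPMF_add_lt_mirrorPMF hp.le hp1.le hlt) hinc hprev)

theorem binPMF_add_le_mirrorPMF_of_le_of_lt (hp : 0 < p) (hp1 : p < 1) (hjm : j ≤ m)
    (hj : (j : ℝ) ≤ (m + 1) * p) (hii' : i ≤ i')
    (hlt : binPMF m p (j + i) < mirrorPMF m p j i) :
    binPMF m p (j + i') ≤ mirrorPMF m p j i' := by
  have hij : i < j := lt_of_binPMF_add_lt_mirrorPMF hp.le hp1.le hlt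
  obtain _ | c := i
  · exact absurd hlt (mirrorPMF_zero_le_binPMF hp.le hp1 hj).not_gt
  have hdec : RatioDecreasesAt m p j c :=
    ratioDecreasesAt_of_binPMF_add_succ_lt hp hp1 hjm hj hlt
  have hmj : m < 2 * j := hdec.lt_two_mul hp1.le hj (by lia)
  induction i', hii' using Nat.le_induction with
  | base => exact hlt.le
  | succ i' hci' ih =>
    rcases lt_or_ge (i' + 1) j with hi'j | hji'
    · exact binPMF_add_succ_le_mirrorPMF_succ hp hp1 hjm hi'j (hdec.mono hp1.le hj (by lia)) ih
    · rw [mirrorPMF_of_le m p hji', binPMF_eq_zero_of_lt p (by lia)]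

end Crossing

section LowerBound

variable {m j : ℕ} {p : ℝ}

theorem half_le_binTail (hp : 0 < p) (hp1 : p < 1) (hj : (j : ℝ) ≤ m * p) :
    1 / 2 ≤ binTail m p j := by
  have hjm : j ≤ m := by
    exact_mod_cast hj.trans (mul_le_of_le_one_right m.cast_nonneg hp1.le)
  have hj' : (j : ℝ) ≤ (m + 1) * p := by linarith
  have hmirror_nonneg : 0 ≤ ∑ i ∈ range (m + 1), mirrorPMF m p j i :=
    sum_nonneg fun i _ => mirrorPMF_nonneg hp.le hp1.le m j i
  have hmoment : 0 ≤ ∑ i ∈ range (m + 1), (i : ℝ) * (binPMF m p (j + i) - mirrorPMF m p j i) := by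
    rw [sum_mul_binPMF_sub_mirrorPMF p (by lia)]
    linarith
  have hgap : 0 ≤ ∑ i ∈ range (m + 1), (binPMF m p (j + i) - mirrorPMF m p j i) :=
    sum_nonneg_of_sign_change (sub_nonneg.2 (mirrorPMF_zero_le_binPMF hp.le hp1 hj'))
      (fun i i' hii' hneg => sub_nonpos.2
        (binPMF_add_le_mirrorPMF_of_le_of_lt hp hp1 hjm hj' hii' (sub_neg.1 hneg))) hmoment
  rw [sum_sub_distrib, ← binTail_eq_sum_range] at hgap
  linarith [sum_mirrorPMF_add_binTail p (hjm.trans m.le_succ)]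

theorem half_mul_le_binTail_succ_succ (hp : 0 < p) (hp1 : p < 1) (hj : (j : ℝ) ≤ m * p) :
    p / 2 ≤ binTail (m + 1) p (j + 1) :=
  calc p / 2 = p * (1 / 2) := by ring
    _ ≤ p * binTail m p j := by gcongr; exact half_le_binTail hp hp1 hj
    _ ≤ binTail (m + 1) p (j + 1) := mul_binTail_le_binTail_succ_succ hp.le hp1.le m j

end LowerBound

theorem binomial_tail_lower_bound_ell_zero
    (n k : ℕ) (p : ℝ) (hn : 0 < n) (hp : 0 < p) (hp1 : p < 1)
    (hk : 0 < k) (hlow : (n : ℝ) * p < k) (hup : (k : ℝ) < n * p + 1 - p)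
    (hkn : k ≤ n - 1) :
    binTail n p k ≥ 1 / 2 * p ^ 2 * ((n : ℝ) / k) ∧
      1 / 2 * p ^ 2 * ((n : ℝ) / k) ≥ p / 2 * (1 - (1 - p) / k) ∧
      p / 2 * (1 - (1 - p) / k) ≥ p / 2 * (1 - 1 / (k : ℝ)) := by
  have hk' : (0 : ℝ) < k := Nat.cast_pos.2 hk
  have hfactor : 1 / 2 * p ^ 2 * ((n : ℝ) / k) = p / 2 * (n * p / k) := by ring
  have htail : p / 2 ≤ binTail n p k := by
    obtain ⟨m, rfl⟩ := Nat.exists_eq_add_one.2 hn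
    obtain ⟨j, rfl⟩ := Nat.exists_eq_add_one.2 hk
    push_cast at hup
    exact half_mul_le_binTail_succ_succ hp hp1 (by linarith)
  refine ⟨?_, ?_, ?_⟩
  · calc 1 / 2 * p ^ 2 * ((n : ℝ) / k) = p / 2 * (n * p / k) := hfactor
      _ ≤ p / 2 := mul_le_of_le_one_right (by positivity) ((div_le_one hk').2 hlow.le)
      _ ≤ binTail n p k := htail
  · rw [hfactor, ge_iff_le, one_sub_div hk'.ne']
    gcongr
    linarith
  · rw [ge_iff_le]
    gcongr
    linarith
end

section
/- Let $Y \sim \mathrm{Poi}(\mu)$ with $\mu > 0$, and let $k$ be a positive integer with $\mu \le k < \mu + 1$. Then $\mathbb{P}[Y \ge k] \ge \frac{1}{2} \cdot \frac{\mu}{2\mu + 1}$. -/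
/-- The Poisson probability mass function: `P[Poi(μ) = i] = exp(-μ) μ^i / i!`. -/
noncomputable def poiPMF (μ : ℝ) (i : ℕ) : ℝ :=
  Real.exp (-μ) * μ ^ i / (Nat.factorial i : ℝ)

/-- The Poisson tail probability `P[Poi(μ) ≥ k]`. -/
noncomputable def poiTail (μ : ℝ) (k : ℕ) : ℝ :=
  ∑' j : ℕ, poiPMF μ (k + j)

/-- The tail conditional expectation `E[Poi(μ) | Poi(μ) ≥ k]`,
i.e. `E[Y · 1_{Y ≥ k}] / P[Y ≥ k]`. -/
noncomputable def poiTCE (μ : ℝ) (k : ℕ) : ℝ :=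
  (∑' j : ℕ, ((k + j : ℕ) : ℝ) * poiPMF μ (k + j)) / poiTail μ k

/-!
Let `p` be the mass function and `T` the tail of `Poi(μ)`. For a natural number `m ≤ μ` the
reflection `m - 1 - j ↦ m + j` sends the indices below `m` to indices at or above `m`, and it does
not decrease `p`: the ratio `p (m + j) / p (m - 1 - j)` is `μ ^ (2 * j + 1)` divided by the product
of the integers from `m - j` to `m + j`, which is at most `m ^ (2 * j + 1)`. Hence `T m ≥ 1 / 2`.
Passing from `m` to `m + 1` costs at most the factor `μ / (m + 1 + μ)`, because
`p m = (m + 1) / μ * p (m + 1) ≤ (m + 1) / μ * T (m + 1)`.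
-/

section

variable {μ : ℝ}

theorem poiPMF_nonneg (hμ : 0 ≤ μ) (i : ℕ) : 0 ≤ poiPMF μ i := by
  unfold poiPMF
  positivity

theorem poiPMF_succ_mul (μ : ℝ) (i : ℕ) : poiPMF μ (i + 1) * (i + 1) = poiPMF μ i * μ := by
  simp only [poiPMF, Nat.factorial_succ, Nat.cast_mul, Nat.cast_succ]
  field_simp
  ring

theorem hasSum_poiPMF (μ : ℝ) : HasSum (poiPMF μ) 1 := by
  have hexp : HasSum (fun i : ℕ ↦ μ ^ i / (i.factorial : ℝ)) (Real.exp μ) := by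
    simpa only [Real.exp_eq_exp_ℝ] using NormedSpace.expSeries_div_hasSum_exp μ
  unfold poiPMF
  simpa only [mul_div_assoc, ← Real.exp_add, neg_add_cancel, Real.exp_zero]
    using hexp.mul_left (Real.exp (-μ))

theorem summable_poiPMF_add (μ : ℝ) (k : ℕ) : Summable fun j ↦ poiPMF μ (k + j) :=
  (hasSum_poiPMF μ).summable.comp_injective (add_right_injective k)

theorem sum_range_poiPMF_add_poiTail (μ : ℝ) (k : ℕ) :
    ∑ i ∈ Finset.range k, poiPMF μ i + poiTail μ k = 1 := by
  simpa only [poiTail, add_comm k, (hasSum_poiPMF μ).tsum_eq]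
    using (hasSum_poiPMF μ).summable.sum_add_tsum_nat_add k

theorem poiPMF_add_poiTail_succ (μ : ℝ) (k : ℕ) :
    poiPMF μ k + poiTail μ (k + 1) = poiTail μ k := by
  have hk := sum_range_poiPMF_add_poiTail μ k
  have hk_succ := sum_range_poiPMF_add_poiTail μ (k + 1)
  rw [Finset.sum_range_succ] at hk_succ
  linarith

theorem sum_range_poiPMF_le_poiTail (hμ : 0 ≤ μ) (k n : ℕ) :
    ∑ j ∈ Finset.range n, poiPMF μ (k + j) ≤ poiTail μ k :=
  (summable_poiPMF_add μ k).sum_le_tsum _ fun _ _ ↦ poiPMF_nonneg hμ _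

theorem poiPMF_le_poiTail (hμ : 0 ≤ μ) (k : ℕ) : poiPMF μ k ≤ poiTail μ k := by
  simpa using sum_range_poiPMF_le_poiTail hμ k 1

theorem poiPMF_le_poiPMF_add {a n : ℕ} (h : 2 * (a : ℝ) + n + 1 ≤ 2 * μ) :
    poiPMF μ a ≤ poiPMF μ (a + n) := by
  have hμ : 0 < μ := by linarith [a.cast_nonneg (α := ℝ), n.cast_nonneg (α := ℝ)]
  induction n using Nat.twoStepInduction generalizing a with
  | zero => rfl
  | one =>
    have ha : (a : ℝ) + 1 ≤ μ := by push_cast at h; linarith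
    refine le_of_mul_le_mul_right ?_ hμ
    rw [← poiPMF_succ_mul]
    exact mul_le_mul_of_nonneg_left ha (poiPMF_nonneg hμ.le _)
  | more n ih _ =>
    push_cast at h
    have inner_le : poiPMF μ (a + 1) ≤ poiPMF μ (a + 1 + n) := ih (by push_cast; linarith)
    have am_gm : ((a : ℝ) + 1) * (a + 1 + n + 1) ≤ μ * μ := by
      have := four_mul_le_sq_add ((a : ℝ) + 1) (a + 1 + n + 1)
      nlinarith
    have succ_a := poiPMF_succ_mul μ a
    have succ_b := poiPMF_succ_mul μ (a + 1 + n)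
    push_cast at succ_b
    have hpos : (0 : ℝ) < μ * (a + 1 + n + 1) := by positivity
    rw [show a + (n + 2) = a + 1 + n + 1 by ring]
    refine le_of_mul_le_mul_right ?_ hpos
    calc poiPMF μ a * (μ * (a + 1 + n + 1))
        = poiPMF μ (a + 1) * ((a + 1) * (a + 1 + n + 1)) := by
          linear_combination (-(a + 1 + n + 1 : ℝ)) * succ_a
      _ ≤ poiPMF μ (a + 1 + n) * (μ * μ) := by
          have := poiPMF_nonneg hμ.le (a + 1 + n)
          gcongr
      _ = poiPMF μ (a + 1 + n + 1) * (μ * (a + 1 + n + 1)) := by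
          linear_combination (-μ) * succ_b

theorem sum_range_poiPMF_le_sum_range_poiPMF_add {m : ℕ} (hm : (m : ℝ) ≤ μ) :
    ∑ i ∈ Finset.range m, poiPMF μ i ≤ ∑ j ∈ Finset.range m, poiPMF μ (m + j) := by
  rw [← Finset.sum_range_reflect]
  refine Finset.sum_le_sum fun j hj ↦ ?_
  obtain ⟨a, rfl⟩ := Nat.exists_eq_add_of_lt (Finset.mem_range.1 hj)
  rw [show j + a + 1 - 1 - j = a by lia, show j + a + 1 + j = a + (2 * j + 1) by ring]
  exact poiPMF_le_poiPMF_add (by push_cast at hm ⊢; linarith)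

theorem half_le_poiTail {m : ℕ} (hm : (m : ℝ) ≤ μ) : 1 / 2 ≤ poiTail μ m := by
  have hμ : 0 ≤ μ := m.cast_nonneg.trans hm
  have head_le_tail : ∑ i ∈ Finset.range m, poiPMF μ i ≤ poiTail μ m :=
    (sum_range_poiPMF_le_sum_range_poiPMF_add hm).trans (sum_range_poiPMF_le_poiTail hμ m m)
  linarith [sum_range_poiPMF_add_poiTail μ m]

theorem mul_poiTail_le_mul_poiTail_succ (hμ : 0 ≤ μ) (m : ℕ) :
    μ * poiTail μ m ≤ (m + 1 + μ) * poiTail μ (m + 1) :=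
  calc μ * poiTail μ m
      = (m + 1) * poiPMF μ (m + 1) + μ * poiTail μ (m + 1) := by
        rw [← poiPMF_add_poiTail_succ]
        linear_combination -poiPMF_succ_mul μ m
    _ ≤ (m + 1) * poiTail μ (m + 1) + μ * poiTail μ (m + 1) := by
        gcongr
        exact poiPMF_le_poiTail hμ (m + 1)
    _ = (m + 1 + μ) * poiTail μ (m + 1) := by ring

theorem poisson_tail_lower_bound_ell_zero_general (hμ : 0 < μ) {k : ℕ} (hk : (k : ℝ) ≤ μ + 1) :
    1 / 2 * (μ / (k + μ)) ≤ poiTail μ k := by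
  cases k with
  | zero =>
    have half_le : 1 / 2 ≤ poiTail μ 0 := half_le_poiTail (by simpa using hμ.le)
    simpa [hμ.ne'] using half_le
  | succ m =>
    push_cast at hk ⊢
    have half_le : 1 / 2 ≤ poiTail μ m := half_le_poiTail (by linarith)
    rw [← mul_div_assoc, div_le_iff₀ (by positivity)]
    calc 1 / 2 * μ ≤ μ * poiTail μ m := by rw [mul_comm]; gcongr
      _ ≤ (m + 1 + μ) * poiTail μ (m + 1) := mul_poiTail_le_mul_poiTail_succ hμ.le m
      _ = poiTail μ (m + 1) * (m + 1 + μ) := mul_comm _ _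

end

theorem poisson_tail_lower_bound_ell_zero
    (μ : ℝ) (k : ℕ) (hμ : 0 < μ) (hk : 0 < k)
    (hkμ : μ ≤ k) (hkμ' : (k : ℝ) < μ + 1) :
    poiTail μ k ≥ 1 / 2 * (μ / (2 * μ + 1)) := by
  refine le_trans ?_ (poisson_tail_lower_bound_ell_zero_general hμ hkμ'.le)
  gcongr 1 / 2 * (μ / ?_); linarith
end
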